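/- arXiv:1011.5898 — 8 statements merged into one kernel-verified Lean document; each statement's English description precedes it below -/
import Mathlib

section
/- Let k be a field and (V,E), (W,F) finite digraphs. Suppose φ : (V → k) → (W → k) is a unital k-algebra homomorphism and φ_* : (E → k) → (F → k) is a k-linear map satisfying φ_*(f·ω) = φ(f)·φ_*(ω), φ_*(ω·f) = φ_*(ω)·φ(f) and φ_*(df) = d(φ(f)) for all f ∈ (V → k) and ω ∈ (E → k). Then there is a unique map ψ : W → V with φ(f) = f ∘ ψ for all f; this ψ satisfies the digraph-morphism condition: for every arrow w → z in F, either ψ(w) = ψ(z) or ψ(w) → ψ(z) in E; and φ_* is uniquely determined by ψ, namely (φ_*ω)(w→z) = ω(ψ(w)→ψ(z)) when ψ(w) → ψ(z) ∈ E and (φ_*ω)(w→z) = 0 when ψ(w) = ψ(z). -/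
/-- fullness direction: every differentiable algebra map between the
differential calculi of two digraphs comes from a unique digraph morphism `ψ`, and
`φ_*` is the map induced by `ψ`. -/
theorem stmt_1 {k : Type*} [Field k] {V W : Type*} [Fintype V] [Fintype W]
    (E : V → V → Prop) (F : W → W → Prop) [DecidableRel E]
    (hE : ∀ x, ¬ E x x) (hF : ∀ w, ¬ F w w)
    (φ : (V → k) →ₐ[k] (W → k))
    (φs : ({p : V × V // E p.1 p.2} → k) →ₗ[k] ({p : W × W // F p.1 p.2} → k))
    (hleft : ∀ (f : V → k) (ω : {p : V × V // E p.1 p.2} → k)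
        (p : {p : W × W // F p.1 p.2}),
        φs (fun q => f q.val.1 * ω q) p = φ f p.val.1 * φs ω p)
    (hright : ∀ (f : V → k) (ω : {p : V × V // E p.1 p.2} → k)
        (p : {p : W × W // F p.1 p.2}),
        φs (fun q => ω q * f q.val.2) p = φs ω p * φ f p.val.2)
    (hd : ∀ (f : V → k) (p : {p : W × W // F p.1 p.2}),
        φs (fun q => f q.val.2 - f q.val.1) p = φ f p.val.2 - φ f p.val.1) :
    ∃ ψ : W → V,
      (∀ f : V → k, φ f = f ∘ ψ) ∧
      (∀ ψ' : W → V, (∀ f : V → k, φ f = f ∘ ψ') → ψ' = ψ) ∧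
      (∀ w z, F w z → ψ w = ψ z ∨ E (ψ w) (ψ z)) ∧
      (∀ (ω : {p : V × V // E p.1 p.2} → k) (p : {p : W × W // F p.1 p.2}),
        φs ω p = if h : E (ψ p.val.1) (ψ p.val.2)
          then ω ⟨(ψ p.val.1, ψ p.val.2), h⟩ else 0) := by
  classical
  have h1 : ∀ w, ∃ v, ∀ f : V → k, φ f w = f v := by
    intro w
    have hex : ∃ v, φ (Pi.single v 1) w ≠ 0 := by
      by_contra hcon
      push Not at hcon
      have hs : (∑ v, Pi.single v (1 : k) : V → k) = 1 := by
        have := Finset.univ_sum_single (1 : V → k)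
        simpa using this
      have h2 : φ (∑ v, Pi.single v (1 : k)) w = 1 := by rw [hs, map_one]; rfl
      rw [map_sum, Finset.sum_apply, Finset.sum_eq_zero (fun v _ => hcon v)] at h2
      exact zero_ne_one h2
    obtain ⟨v, hv⟩ := hex
    refine ⟨v, fun f => ?_⟩
    have h2 : f * Pi.single v 1 = f v • (Pi.single v 1 : V → k) := by
      ext x
      by_cases hx : x = v
      · subst hx; simp
      · simp [hx]
    have h3 := congrFun (congrArg φ h2) w
    rw [map_mul, map_smul] at h3
    simp only [Pi.mul_apply, Pi.smul_apply, smul_eq_mul] at h3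
    exact mul_right_cancel₀ hv h3
  choose ψ hψ using h1
  -- localisation of `φs` at the image arrow
  have key : ∀ (ω : {p : V × V // E p.1 p.2} → k) (p : {p : W × W // F p.1 p.2}),
      φs ω p = φs (fun q => Pi.single (M := fun _ => k) (ψ p.val.1) 1 q.val.1 *
        (ω q * Pi.single (M := fun _ => k) (ψ p.val.2) 1 q.val.2)) p := by
    intro ω p
    rw [hleft, hright, hψ, hψ]
    simp
  have hzero : ∀ (ω : {p : V × V // E p.1 p.2} → k) (p : {p : W × W // F p.1 p.2}),
      ¬ E (ψ p.val.1) (ψ p.val.2) → φs ω p = 0 := by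
    intro ω p hn
    rw [key]
    have h2 : (fun q : {p : V × V // E p.1 p.2} =>
        Pi.single (M := fun _ => k) (ψ p.val.1) 1 q.val.1 *
        (ω q * Pi.single (M := fun _ => k) (ψ p.val.2) 1 q.val.2)) = 0 := by
      ext ⟨⟨x, y⟩, hxy⟩
      simp only [Pi.single_apply, Pi.zero_apply]
      by_cases hx : x = ψ p.val.1
      · by_cases hy : y = ψ p.val.2
        · subst hx hy; exact absurd hxy hn
        · simp [hy]
      · simp [hx]
    rw [h2, map_zero]; rfl
  refine ⟨ψ, fun f => funext fun w => hψ w f, ?_, ?_, ?_⟩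
  · intro ψ' h'
    ext w
    by_contra hne
    have h2 := congrFun (h' (Pi.single (ψ w) 1)) w
    rw [hψ] at h2
    simp [hne] at h2
  · intro w z hwz
    by_contra hcon
    push Not at hcon
    have h2 := hd (Pi.single (ψ z) 1) ⟨(w, z), hwz⟩
    rw [hzero _ _ hcon.2, hψ, hψ] at h2
    simp [hcon.1] at h2
  · intro ω p
    split_ifs with h
    · have hne : ψ p.val.1 ≠ ψ p.val.2 := fun he => hE _ (he ▸ h)
      have h2 := hd (Pi.single (ψ p.val.2) 1) p
      rw [key, hψ, hψ] at h2
      rw [key]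
      have h3 : (fun q : {p : V × V // E p.1 p.2} =>
          Pi.single (M := fun _ => k) (ψ p.val.1) 1 q.val.1 *
          (ω q * Pi.single (M := fun _ => k) (ψ p.val.2) 1 q.val.2)) =
          ω ⟨(ψ p.val.1, ψ p.val.2), h⟩ • (fun q : {p : V × V // E p.1 p.2} =>
          Pi.single (M := fun _ => k) (ψ p.val.1) 1 q.val.1 *
          ((Pi.single (M := fun _ => k) (ψ p.val.2) 1 q.val.2 -
            Pi.single (M := fun _ => k) (ψ p.val.2) 1 q.val.1) *
            Pi.single (M := fun _ => k) (ψ p.val.2) 1 q.val.2)) := by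
        ext ⟨⟨x, y⟩, hxy⟩
        simp only [Pi.single_apply, Pi.smul_apply, smul_eq_mul]
        by_cases hx : x = ψ p.val.1
        · by_cases hy : y = ψ p.val.2
          · subst hx hy; simp [hne]
          · simp [hy]
        · simp [hx]
      rw [h3, map_smul, Pi.smul_apply, h2]
      simp [hne]
    · exact hzero ω p h
end

section
/- Let k be a field, Γ = (V,~) a finite simple graph viewed as a bidirected digraph with directed edge set D = {(x,y) : x ~ y}, and let connection data be given: weights g_{x→y} ∈ k for each directed edge, scalars σ^{x,y,z}_w ∈ k for each pair of 2-paths (x,y,z), (x,w,z) with the same endpoints, and scalars α^{x,y}_w ∈ k for each directed edge (x,y) and 2-path (x,w,y). Define ∇ : (D → k) → (P₂ → k) by (∇ω)(u,v,w) = ω(v,w) − Σ_{y : (u,y,w) ∈ P₂} σ^{u,y,w}_v·ω(u,y) + 1_{u~w}·α^{u,w}_v·ω(u,w), define B(ρ)(x) = Σ_{y ~ x} g_{y→x}·ρ(x,y,x), and define (df)(x,y) = f(y) − f(x). Then: (1) the Laplace–Beltrami operator Δf := B(∇(df)) is the weighted graph Laplacian (Δf)(x) = Σ_{y ~ x}(f(x)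 − f(y))·γ_{x,y}, where γ_{x,y} = g_{y→x} + Σ_{w ~ x} g_{w→x}·σ^{x,y,x}_w; (2) B ∘ σ = B, where σ also denotes the induced operator (σρ)(x,w,z) = Σ_y σ^{x,y,z}_w·ρ(x,y,z), holds if and only if Σ_{w ~ x} g_{w→x}·σ^{x,y,x}_w = g_{y→x} for all directed edges (x,y), and in that case γ_{x,y} = 2·g_{y→x}. -/
open Finset

/-- Exterior derivative of a function on vertices: `(df)(x→y) = f(y) − f(x)`. -/
def dd {k V : Type*} [Ring k] (f : V → k) : V → V → k := fun x y => f y - f x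

/-- The bimodule connection determined by the data `(σ, α)` on a bidirected graph:
`(∇ω)(u,v,w) = ω(v,w) − Σ_y σ^{u,y,w}_v ω(u,y) + 1_{u~w} α^{u,w}_v ω(u,w)`. -/
def nabla {k V : Type*} [Ring k] [Fintype V] (G : SimpleGraph V) [DecidableRel G.Adj]
    (σ : V → V → V → V → k) (α : V → V → V → k) (ω : V → V → k) : V → V → V → k :=
  fun u v w =>
    ω v w - (∑ y : V, if G.Adj u y ∧ G.Adj y w then σ u y w v * ω u y else 0)
      + (if G.Adj u w then α u w v * ω u w else 0)

/-- The inverse metric `B = ( , )` of the weights `g`: `B(ρ)(x) = Σ_{y~x} g_{y→x} ρ(x,y,x)`. -/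
def Bm {k V : Type*} [Ring k] [Fintype V] (G : SimpleGraph V) [DecidableRel G.Adj]
    (g : V → V → k) (ρ : V → V → V → k) : V → k :=
  fun x => ∑ y : V, if G.Adj y x then g y x * ρ x y x else 0

/-- The weight `γ_{x,y} = g_{y→x} + Σ_{w~x} g_{w→x} σ^{x,y,x}_w`. -/
def gam {k V : Type*} [Ring k] [Fintype V] (G : SimpleGraph V) [DecidableRel G.Adj]
    (g : V → V → k) (σ : V → V → V → V → k) (x y : V) : k :=
  g y x + ∑ w : V, if G.Adj w x then g w x * σ x y x w else 0

/-- The operator on `Ω¹ ⊗_A Ω¹` induced by the coefficients `σ`: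
`(σρ)(x,w,z) = Σ_y σ^{x,y,z}_w ρ(x,y,z)`. -/
def sigOp {k V : Type*} [Ring k] [Fintype V] (G : SimpleGraph V) [DecidableRel G.Adj]
    (σ : V → V → V → V → k) (ρ : V → V → V → k) : V → V → V → k :=
  fun x w z => ∑ y : V, if G.Adj x y ∧ G.Adj y z then σ x y z w * ρ x y z else 0

theorem Bm_sigOp_aux {k V : Type*} [Field k] [Fintype V] (G : SimpleGraph V)
    [DecidableRel G.Adj] (g : V → V → k) (σ : V → V → V → V → k) (ρ : V → V → V → k) (x : V) :
    Bm G g (sigOp G σ ρ) x = ∑ y : V, if G.Adj y x then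
      (∑ w : V, if G.Adj w x then g w x * σ x y x w else 0) * ρ x y x else 0 := by
  have h1 : Bm G g (sigOp G σ ρ) x = ∑ w : V, ∑ y : V, if G.Adj y x then
      (if G.Adj w x then g w x * σ x y x w else 0) * ρ x y x else 0 := by
    unfold Bm sigOp
    refine Finset.sum_congr rfl fun w _ => ?_
    by_cases hw : G.Adj w x
    · simp only [hw, if_true, Finset.mul_sum]
      refine Finset.sum_congr rfl fun y _ => ?_
      by_cases hy : G.Adj y x
      · simp [hy, hy.symm, mul_assoc]
      · simp [hy]
    · simp [hw]
  rw [h1, Finset.sum_comm]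
  refine Finset.sum_congr rfl fun y _ => ?_
  by_cases hy : G.Adj y x
  · simp only [hy, if_true, Finset.sum_mul]
  · simp [hy]

/-- (1) the Laplace–Beltrami operator `Δ = ( , )∇d` of a bimodule
connection `(σ,α)` and metric weights `g` on a bidirected graph is the weighted graph
Laplacian with weights `γ_{x,y}`; (2) `( , )σ = ( , )` iff
`Σ_{w~x} g_{w→x} σ^{x,y,x}_w = g_{y→x}` for all edges, in which case `γ_{x,y} = 2 g_{y→x}`. -/
theorem stmt_7 {k V : Type*} [Field k] [Fintype V] (G : SimpleGraph V)
    [DecidableRel G.Adj] (g : V → V → k) (σ : V → V → V → V → k) (α : V → V → V → k) :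
    (∀ (f : V → k) (x : V),
        Bm G g (nabla G σ α (dd f)) x
          = ∑ y : V, if G.Adj y x then (f x - f y) * gam G g σ x y else 0) ∧
    ((∀ (ρ : V → V → V → k) (x : V), Bm G g (sigOp G σ ρ) x = Bm G g ρ x) ↔
      (∀ x y : V, G.Adj x y →
        (∑ w : V, if G.Adj w x then g w x * σ x y x w else 0) = g y x)) ∧
    ((∀ x y : V, G.Adj x y →
        (∑ w : V, if G.Adj w x then g w x * σ x y x w else 0) = g y x) →
      ∀ x y : V, G.Adj x y → gam G g σ x y = 2 * g y x) := by
  refine ⟨?_, ⟨?_, ?_⟩, ?_⟩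
  · intro f x
    have h : Bm G g (nabla G σ α (dd f)) x = Bm G g (fun _ y z => f z - f y) x
        - Bm G g (sigOp G σ (fun u y _ => f y - f u)) x := by
      unfold Bm
      rw [← Finset.sum_sub_distrib]
      refine Finset.sum_congr rfl fun y _ => ?_
      by_cases hy : G.Adj y x
      · simp [hy, nabla, dd, sigOp, mul_sub]
      · simp [hy]
    rw [h, Bm_sigOp_aux]
    unfold Bm
    rw [← Finset.sum_sub_distrib]
    refine Finset.sum_congr rfl fun y _ => ?_
    by_cases hy : G.Adj y x
    · simp only [hy, if_true, gam]
      ring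
    · simp [hy]
  · intro h x y hxy
    classical
    have := h (fun _ b _ => if b = y then 1 else 0) x
    rw [Bm_sigOp_aux] at this
    unfold Bm at this
    have h2 := (Finset.sum_eq_single y (by intro b _ hb; simp [hb]) (by simp)).symm.trans
      (this.trans (Finset.sum_eq_single y (by intro b _ hb; simp [hb]) (by simp)))
    simpa [hxy.symm] using h2
  · intro h ρ x
    rw [Bm_sigOp_aux]
    unfold Bm
    refine Finset.sum_congr rfl fun y _ => ?_
    by_cases hy : G.Adj y x
    · rw [h x y hy.symm]
    · simp [hy]
  · intro h x y hxy
    unfold gam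
    rw [h x y hxy, two_mul]
end

section
/- Let G be a finite group and C ⊆ G \ {e} a subset closed under inversion and under conjugation by its own elements (a, b ∈ C implies b⁻¹ab ∈ C). Then: (i) if x⁻¹y ∈ C and y⁻¹z ∈ C then x⁻¹(xy⁻¹z) ∈ C and (xy⁻¹z)⁻¹z ∈ C (every 2-step x → y → z in the Cayley graph induces a 2-step x → xy⁻¹z → z); (ii) for all x, v, w, z ∈ G with x⁻¹z ∈ C, x⁻¹v ∈ C, v⁻¹w ∈ C and w⁻¹z ∈ C, the set {y ∈ G : y⁻¹x ∈ C, y⁻¹w ∈ C, w = yx⁻¹z, v = xy⁻¹w} has exactly one element when v = z and is empty when v ≠ z. (Claim (ii) is the metric-compatibility equation for the Cayley-graph connection σ_{x,z}(y) = xy⁻¹z with the Euclidean metric.) -/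
/-- on a Cayley graph of `(G, C)` with `C` closed under inversion and
self-conjugation: (i) every 2-step `x → y → z` induces a 2-step `x → xy⁻¹z → z`;
(ii) the metric-compatibility equation holds: the relevant set of `y`'s has exactly
one element when `v = z` and is empty when `v ≠ z`. -/
theorem stmt_8 {G : Type*} [Group G] [Fintype G]
    (C : Set G) (hC1 : (1 : G) ∉ C) (hCinv : ∀ a ∈ C, a⁻¹ ∈ C)
    (hCconj : ∀ a ∈ C, ∀ b ∈ C, b⁻¹ * a * b ∈ C) :
    (∀ x y z : G, x⁻¹ * y ∈ C → y⁻¹ * z ∈ C →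
        x⁻¹ * (x * y⁻¹ * z) ∈ C ∧ (x * y⁻¹ * z)⁻¹ * z ∈ C) ∧
    (∀ x v w z : G, x⁻¹ * z ∈ C → x⁻¹ * v ∈ C → v⁻¹ * w ∈ C → w⁻¹ * z ∈ C →
        ((v = z → ∃! y : G,
            y⁻¹ * x ∈ C ∧ y⁻¹ * w ∈ C ∧ w = y * x⁻¹ * z ∧ v = x * y⁻¹ * w) ∧
         (v ≠ z → ¬ ∃ y : G,
            y⁻¹ * x ∈ C ∧ y⁻¹ * w ∈ C ∧ w = y * x⁻¹ * z ∧ v = x * y⁻¹ * w))) := by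
  refine ⟨?_, ?_⟩
  · intro x y z hxy hyz
    refine ⟨?_, ?_⟩
    · have e : x⁻¹ * (x * y⁻¹ * z) = y⁻¹ * z := by group
      rw [e]; exact hyz
    · have h := hCconj _ hxy _ hyz
      have e : (x * y⁻¹ * z)⁻¹ * z = (y⁻¹ * z)⁻¹ * (x⁻¹ * y) * (y⁻¹ * z) := by group
      rw [e]; exact h
  · intro x v w z hxz hxv hvw hwz
    refine ⟨?_, ?_⟩
    · intro hv
      refine ⟨w * z⁻¹ * x, ⟨?_, ?_, ?_, ?_⟩, ?_⟩
      · have h := hCconj _ hwz _ (hCinv _ hxz)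
        have e : (w * z⁻¹ * x)⁻¹ * x
            = ((x⁻¹ * z)⁻¹)⁻¹ * (w⁻¹ * z) * (x⁻¹ * z)⁻¹ := by group
        rw [e]; exact h
      · have e : (w * z⁻¹ * x)⁻¹ * w = x⁻¹ * z := by group
        rw [e]; exact hxz
      · group
      · rw [hv]; group
      · rintro y ⟨-, -, h, -⟩
        rw [h]; group
    · rintro hv ⟨y, -, -, h, h'⟩
      apply hv
      rw [h', h]; group
end

section
/- Let k be a field, G a finite group and C ⊆ G \ {e} closed under inversion and under conjugation by its own elements. On the space of k-valued functions on the directed Cayley edges D = {(x,xa) : x ∈ G, a ∈ C}, define the Maurer–Cartan edge Laplacian Δ as the linear operator determined on the basis of indicator 1-forms ω_{x→y} by Δω_{x→y} = |C|·ω_{x→y} − 2·Σ_{z : y⁻¹z ∈ C} ω_{xy⁻¹z → z} + Σ ω_{x→s}, where the last sum runs over triples (w,z,s) ∈ G³ such that (x,y,z), (x,w,z), (w,z,s) and (w,x,s) are all 2-paths of the Cayley graph, w = xy⁻¹z and x = wz⁻¹s. Then for every a ∈ C, Δe_a = 2·(|C|·e_a − Σ_{b∈C} e_{b⁻¹ab}).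 -/
open Finset

/-- The indicator 1-form `ω_{x→y}` on pairs of vertices. -/
def indForm {k : Type*} [Field k] {G : Type*} [DecidableEq G] (x y : G) : G → G → k :=
  fun u v => if u = x ∧ v = y then 1 else 0

/-- The left-invariant 1-form `e_a` on a Cayley graph: `e_a(x, xb) = δ_{a,b}`. -/
def eForm {k : Type*} [Field k] {G : Type*} [Group G] [DecidableEq G] (a : G) :
    G → G → k :=
  fun u v => if u⁻¹ * v = a then 1 else 0

/-- the Maurer–Cartan edge Laplacian of a Cayley graph, defined on the
basis of indicator 1-forms by the stated formula, satisfies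
`Δ e_a = 2(|C| e_a − Σ_{b∈C} e_{b⁻¹ab})` on the left-invariant forms. -/
theorem stmt_11 {k : Type*} [Field k] {G : Type*} [Group G] [Fintype G] [DecidableEq G]
    (C : Finset G) (hC1 : (1 : G) ∉ C) (hCinv : ∀ a ∈ C, a⁻¹ ∈ C)
    (hCconj : ∀ a ∈ C, ∀ b ∈ C, b⁻¹ * a * b ∈ C)
    (Δ : (G → G → k) →ₗ[k] (G → G → k))
    (hΔ : ∀ x y : G, x⁻¹ * y ∈ C →
      Δ (indForm x y)
        = (C.card : k) • indForm x y
          - (2 : k) • (∑ z : G, if y⁻¹ * z ∈ C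
              then (indForm (x * y⁻¹ * z) z : G → G → k) else 0)
          + ∑ w : G, ∑ z : G, ∑ s : G,
              if ((x⁻¹ * y ∈ C ∧ y⁻¹ * z ∈ C) ∧ (x⁻¹ * w ∈ C ∧ w⁻¹ * z ∈ C) ∧
                  (w⁻¹ * z ∈ C ∧ z⁻¹ * s ∈ C) ∧ (w⁻¹ * x ∈ C ∧ x⁻¹ * s ∈ C) ∧
                  w = x * y⁻¹ * z ∧ x = w * z⁻¹ * s)
              then (indForm x s : G → G → k) else 0) :
    ∀ a ∈ C, Δ (eForm a)
      = (2 : k) • ((C.card : k) • (eForm a : G → G → k)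
          - ∑ b ∈ C, (eForm (b⁻¹ * a * b) : G → G → k)) := by
  intro a ha
  have he : ∀ c : G, (eForm c : G → G → k) = ∑ x : G, indForm x (x * c) := by
    intro c
    funext u v
    simp only [Finset.sum_apply, eForm, indForm, ite_and]
    rw [Finset.sum_ite_eq]
    simp [inv_mul_eq_iff_eq_mul]
  have hz : ∀ (x : G) (f : G → G → G → k),
      (∑ z : G, if (x * a)⁻¹ * z ∈ C then f z else 0) = ∑ b ∈ C, f (x * a * b) := by
    intro x f
    rw [← Equiv.sum_comp (Equiv.mulLeft (x * a))]
    simp only [Equiv.coe_mulLeft, inv_mul_cancel_left]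
    rw [Finset.sum_ite_mem, Finset.univ_inter]
  have hx : ∀ x : G, Δ (indForm x (x * a)) = (2 : k) • ((C.card : k) • indForm x (x * a)
      - ∑ b ∈ C, (indForm (x * b) (x * b * (b⁻¹ * a * b)) : G → G → k)) := by
    intro x
    rw [hΔ x (x * a) (by simpa using ha), hz x (fun z => indForm (x * (x * a)⁻¹ * z) z)]
    have h3 : ∀ w z s : G,
        (((x⁻¹ * (x * a) ∈ C ∧ (x * a)⁻¹ * z ∈ C) ∧ (x⁻¹ * w ∈ C ∧ w⁻¹ * z ∈ C) ∧
          (w⁻¹ * z ∈ C ∧ z⁻¹ * s ∈ C) ∧ (w⁻¹ * x ∈ C ∧ x⁻¹ * s ∈ C) ∧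
          w = x * (x * a)⁻¹ * z ∧ x = w * z⁻¹ * s)) ↔
        (w = x * (x * a)⁻¹ * z ∧ s = x * a ∧ (x * a)⁻¹ * z ∈ C) := by
      intro w z s
      constructor
      · rintro ⟨⟨_, h1⟩, _, _, _, h2, h4⟩
        refine ⟨h2, ?_, h1⟩
        have h5 : s = z * w⁻¹ * x := by
          rw [h4]; group
        rw [h5, h2]; group
      · rintro ⟨h1, h2, h4⟩
        obtain ⟨b, rfl⟩ : ∃ b, z = x * a * b := ⟨(x * a)⁻¹ * z, by group⟩
        have hw : w = x * b := by rw [h1]; group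
        have hb : b ∈ C := by rwa [inv_mul_cancel_left] at h4
        subst hw h2
        have hb' := hCinv b hb
        have hc := hCconj a ha b hb
        have e1 : (x * b)⁻¹ * (x * a * b) = b⁻¹ * a * b := by group
        have e2 : (x * a * b)⁻¹ * (x * a) = b⁻¹ := by group
        have e3 : (x * b)⁻¹ * x = b⁻¹ := by group
        have e4 : x = x * b * (x * a * b)⁻¹ * (x * a) := by group
        refine ⟨⟨by simpa using ha, h4⟩, ⟨by simpa using hb, by rwa [e1]⟩,
          ⟨by rwa [e1], by rwa [e2]⟩, ⟨by rwa [e3], by simpa using ha⟩, h1, e4⟩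
    simp only [h3]
    rw [Finset.sum_comm]
    simp only [ite_and, Finset.sum_ite_irrel, Finset.sum_const_zero, Finset.sum_ite_eq',
      Finset.mem_univ, if_true]
    rw [hz x (fun _ => indForm x (x * a))]
    have h6 : ∀ b : G, (indForm (x * (x * a)⁻¹ * (x * a * b)) (x * a * b) : G → G → k)
        = indForm (x * b) (x * b * (b⁻¹ * a * b)) := by
      intro b
      congr 1 <;> group
    simp only [h6, Finset.sum_const, ← Nat.cast_smul_eq_nsmul k]
    module
  rw [he a, map_sum]
  simp only [hx, he (_ * _ * _)]
  rw [← Finset.smul_sum, Finset.sum_sub_distrib, ← Finset.smul_sum, Finset.sum_comm]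
  congr 2
  refine Finset.sum_congr rfl fun b _ => ?_
  exact Equiv.sum_comp (Equiv.mulRight b) (fun x => (indForm x (x * (b⁻¹ * a * b)) : G → G → k))
end

section
/- Let G = (V,~) be a finite simple graph and M its canonical edge-Laplacian matrix over ℝ, indexed by the set D of directed edges. Then every column sum of M vanishes: Σ_{e ∈ D} M[e,f] = 0 for all f ∈ D (equivalently, the constant 1-form θ satisfies Δθ = 0). If moreover G is connected with at least two vertices, then all row sums Σ_{f ∈ D} M[e,f] vanish if and only if G is regular. -/
open Finset

/-- The canonical edge-Laplacian matrix of a graph, indexed by directed edges: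
`M[(x,y),(w,z)] = deg(x)·1_{(w,z)=(x,y)} + 1_{w=x} − 2·1_{w=y}`. -/
def edgeLapMatrix {V : Type*} [Fintype V] [DecidableEq V] (G : SimpleGraph V)
    [DecidableRel G.Adj] (k : Type*) [Ring k] :
    Matrix {p : V × V // G.Adj p.1 p.2} {p : V × V // G.Adj p.1 p.2} k :=
  Matrix.of fun e f =>
    (if f = e then (G.degree e.val.1 : k) else 0)
      + (if f.val.1 = e.val.1 then 1 else 0)
      - 2 * (if f.val.1 = e.val.2 then 1 else 0)

theorem sum_dir_edges {V : Type*} [Fintype V] [DecidableEq V] (G : SimpleGraph V)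
    [DecidableRel G.Adj] (g : V × V → ℝ) :
    (∑ e : {p : V × V // G.Adj p.1 p.2}, g e.val) =
      ∑ x : V, ∑ y : V, if G.Adj x y then g (x, y) else 0 := by
  rw [← Fintype.sum_prod_type' (f := fun x y => if G.Adj x y then g (x, y) else 0)]
  rw [← Finset.sum_filter]
  exact (Finset.sum_subtype _ (by simp) g).symm

theorem sum_fst_edges {V : Type*} [Fintype V] [DecidableEq V] (G : SimpleGraph V)
    [DecidableRel G.Adj] (v : V) :
    (∑ e : {p : V × V // G.Adj p.1 p.2}, if e.val.1 = v then (1 : ℝ) else 0) = G.degree v := by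
  rw [sum_dir_edges G (fun p => if p.1 = v then (1 : ℝ) else 0)]
  rw [Finset.sum_eq_single v]
  · simp [← SimpleGraph.card_neighborFinset_eq_degree, SimpleGraph.neighborFinset_eq_filter]
  · intro b _ hb
    simp [hb]
  · simp

theorem sum_snd_edges {V : Type*} [Fintype V] [DecidableEq V] (G : SimpleGraph V)
    [DecidableRel G.Adj] (v : V) :
    (∑ e : {p : V × V // G.Adj p.1 p.2}, if e.val.2 = v then (1 : ℝ) else 0) = G.degree v := by
  rw [sum_dir_edges G (fun p => if p.2 = v then (1 : ℝ) else 0), Finset.sum_comm]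
  rw [Finset.sum_eq_single v]
  · simp [← SimpleGraph.card_neighborFinset_eq_degree, SimpleGraph.neighborFinset_eq_filter,
      G.adj_comm v]
  · intro b _ hb
    simp [hb]
  · simp

theorem row_sum_eq {V : Type*} [Fintype V] [DecidableEq V] (G : SimpleGraph V)
    [DecidableRel G.Adj] (e : {p : V × V // G.Adj p.1 p.2}) :
    (∑ f : {p : V × V // G.Adj p.1 p.2}, edgeLapMatrix G ℝ e f) =
      2 * (G.degree e.val.1 - G.degree e.val.2) := by
  simp only [edgeLapMatrix, Matrix.of_apply, Finset.sum_sub_distrib, Finset.sum_add_distrib,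
    ← Finset.mul_sum, sum_fst_edges, Finset.sum_ite_eq', Finset.mem_univ, if_true]
  ring

/-- every column sum of the canonical edge-Laplacian matrix vanishes
(i.e. `Δθ = 0`); and for a connected graph with at least two vertices all row sums
vanish iff the graph is regular. -/
theorem stmt_12 {V : Type*} [Fintype V] [DecidableEq V] (G : SimpleGraph V)
    [DecidableRel G.Adj] :
    (∀ f : {p : V × V // G.Adj p.1 p.2},
        (∑ e : {p : V × V // G.Adj p.1 p.2}, edgeLapMatrix G ℝ e f) = 0) ∧
    (G.Connected → 1 < Fintype.card V →
      ((∀ e : {p : V × V // G.Adj p.1 p.2},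
          (∑ f : {p : V × V // G.Adj p.1 p.2}, edgeLapMatrix G ℝ e f) = 0) ↔
        ∃ d : ℕ, G.IsRegularOfDegree d)) := by
  constructor
  · intro f
    simp only [edgeLapMatrix, Matrix.of_apply, Finset.sum_sub_distrib, Finset.sum_add_distrib,
      ← Finset.mul_sum, Finset.sum_ite_eq, Finset.mem_univ, if_true]
    simp only [eq_comm (a := f.val.1), sum_fst_edges, sum_snd_edges]
    ring
  · intro hc _
    simp only [row_sum_eq]
    constructor
    · intro h
      have hadj : ∀ x y, G.Adj x y → G.degree x = G.degree y := by
        intro x y hxy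
        have := h ⟨(x, y), hxy⟩
        have h2 : (G.degree x : ℝ) = G.degree y := by
          simp only at this
          linarith
        exact_mod_cast h2
      obtain ⟨v⟩ := hc.nonempty
      refine ⟨G.degree v, fun w => ?_⟩
      obtain ⟨p⟩ := hc.preconnected w v
      induction p with
      | nil => rfl
      | cons hh _ ih => exact (hadj _ _ hh).trans ih
    · rintro ⟨d, hd⟩ e
      simp [hd.degree_eq]
end

section
/- Let k be a field and G = (V,~) a finite connected simple graph with at least two vertices (so every vertex has degree ≥ 1). Let M be the canonical edge-Laplacian matrix over k, indexed by the set D of directed edges, and let L be the graph Laplacian matrix on vertices. Then the characteristic polynomial of M factors as charpoly(M) = charpoly(2·L) · Π_{x ∈ V} (X − deg(x))^{deg(x) − 1}, where deg(x) is regarded as an element of k. -/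
open Finset Polynomial

/-- The graph-Laplacian matrix on vertices: `L[x,y] = deg(x)·1_{x=y} − 1_{x~y}`. -/
def lapMatrix {V : Type*} [Fintype V] [DecidableEq V] (G : SimpleGraph V)
    [DecidableRel G.Adj] (k : Type*) [Ring k] : Matrix V V k :=
  Matrix.of fun x y =>
    (if x = y then (G.degree x : k) else 0) - (if G.Adj x y then 1 else 0)

lemma aux_det {R m n : Type*} [CommRing R] [Fintype m] [Fintype n] [DecidableEq m]
    [DecidableEq n] (A : Matrix m m R) (B : Matrix n n R) (U : Matrix m n R)
    (P : Matrix n m R) (h : P * A = B * P) :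
    B.det * (A - U * P).det = (B - P * U).det * A.det := by
  have h1 : (Matrix.fromBlocks 1 P U A).det = (A - U * P).det := by
    rw [Matrix.det_fromBlocks_one₁₁]
  have h2 : (Matrix.fromBlocks B (-P) 0 1) * (Matrix.fromBlocks 1 P U A)
      = Matrix.fromBlocks (B - P * U) 0 U A := by
    rw [Matrix.fromBlocks_multiply]
    simp [h, sub_eq_add_neg]
  have h3 := congrArg Matrix.det h2
  rw [Matrix.det_mul, Matrix.det_fromBlocks_zero₂₁, Matrix.det_fromBlocks_zero₁₂, h1] at h3
  simpa using h3

lemma aux_prod {R V : Type*} [CommRing R] [Fintype V] [DecidableEq V]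
    (G : SimpleGraph V) [DecidableRel G.Adj] (f : V → R) :
    ∏ e : {p : V × V // G.Adj p.1 p.2}, f e.val.1 = ∏ x, f x ^ G.degree x := by
  rw [← Finset.prod_subtype (Finset.univ.filter fun p : V × V => G.Adj p.1 p.2) (by simp)
    (fun p : V × V => f p.1), Finset.prod_filter, Fintype.prod_prod_type]
  refine Finset.prod_congr rfl fun x _ => ?_
  dsimp only
  rw [← Finset.prod_filter, Finset.prod_const, ← SimpleGraph.card_neighborFinset_eq_degree,
    SimpleGraph.neighborFinset_eq_filter]

lemma aux_count {R V : Type*} [CommRing R] [Fintype V] [DecidableEq V]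
    (G : SimpleGraph V) [DecidableRel G.Adj] (g : V → V → R) :
    ∑ e : {p : V × V // G.Adj p.1 p.2}, g e.val.1 e.val.2
      = ∑ x, ∑ y, if G.Adj x y then g x y else 0 := by
  rw [← Finset.sum_subtype (Finset.univ.filter fun p : V × V => G.Adj p.1 p.2) (by simp)
    (fun p : V × V => g p.1 p.2), Finset.sum_filter, Fintype.sum_prod_type]

/-- for a connected graph with at least two vertices, the characteristic
polynomial of the canonical edge Laplacian is
`charpoly(2L) · Π_x (X − deg x)^{deg x − 1}`. -/
theorem stmt_14 {k : Type*} [Field k] {V : Type*} [Fintype V] [DecidableEq V]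
    (G : SimpleGraph V) [DecidableRel G.Adj]
    (hconn : G.Connected) (hcard : 1 < Fintype.card V) :
    (edgeLapMatrix G k).charpoly
      = ((2 : k) • lapMatrix G k).charpoly
        * ∏ x : V, (X - C (G.degree x : k)) ^ (G.degree x - 1) := by
  classical
  have hC2 : (C (2 : k) : k[X]) = 2 := map_ofNat C 2
  have hdeg : ∀ x, 0 < G.degree x := by
    have : Nontrivial V := Fintype.one_lt_card_iff_nontrivial.mp hcard
    exact fun x => hconn.preconnected.degree_pos_of_nontrivial x
  let E := {p : V × V // G.Adj p.1 p.2}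
  let A : Matrix E E k[X] := Matrix.diagonal fun e => X - C (G.degree e.val.1 : k)
  let B : Matrix V V k[X] := Matrix.diagonal fun x => X - C (G.degree x : k)
  let P : Matrix V E k[X] := Matrix.of fun x e => if e.val.1 = x then 1 else 0
  let U : Matrix E V k[X] := Matrix.of fun e x =>
    (if x = e.val.1 then 1 else 0) - 2 * (if x = e.val.2 then 1 else 0)
  have hPA : P * A = B * P := by
    ext1 x e
    simp only [A, B, P, Matrix.mul_diagonal, Matrix.diagonal_mul, Matrix.of_apply]
    split_ifs with h
    · subst h; ring
    · simp
  have key := aux_det A B U P hPA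
  have hM : A - U * P = (edgeLapMatrix G k).charmatrix := by
    ext1 e f
    have : (U * P) e f = (if f.val.1 = e.val.1 then 1 else 0)
        - 2 * (if f.val.1 = e.val.2 then 1 else 0) := by
      simp [U, P, Matrix.mul_apply]
    rw [Matrix.sub_apply, this, Matrix.charmatrix_apply]
    simp only [A, edgeLapMatrix, Matrix.diagonal_apply, Matrix.of_apply]
    by_cases h : e = f
    · subst h
      simp only [if_true, map_add, map_sub, map_mul, apply_ite (C : k → k[X])]
      simp [hC2]; ring
    · simp only [h, Ne.symm h, if_false, map_add, map_sub, map_mul]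
      split_ifs <;> simp [hC2]
  have hL : B - P * U = ((2 : k) • lapMatrix G k).charmatrix := by
    ext1 x y
    have : (P * U) x y = (if x = y then (G.degree x : k[X]) else 0)
        - 2 * (if G.Adj x y then 1 else 0) := by
      rw [Matrix.mul_apply]
      simp only [P, U, Matrix.of_apply]
      rw [aux_count G (fun a b => (if a = x then (1 : k[X]) else 0) *
        ((if y = a then 1 else 0) - 2 * (if y = b then 1 else 0)))]
      rw [Finset.sum_eq_single x (by intro b _ hb; simp [hb]) (by simp)]
      simp only [if_true, one_mul]
      rw [← Finset.sum_filter, ← SimpleGraph.neighborFinset_eq_filter, Finset.sum_sub_distrib,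
        Finset.sum_const, ← Finset.mul_sum, SimpleGraph.card_neighborFinset_eq_degree]
      simp [eq_comm]
    rw [Matrix.sub_apply, this, Matrix.charmatrix_apply]
    simp only [B, lapMatrix, Matrix.diagonal_apply, Matrix.of_apply, Matrix.smul_apply]
    by_cases h : x = y
    · subst h
      simp [hC2]; ring
    · simp only [h, if_false]
      split_ifs <;> simp [hC2]
  rw [hM, hL] at key
  change B.det * (edgeLapMatrix G k).charpoly = ((2 : k) • lapMatrix G k).charpoly * A.det at key
  have hA : A.det = B.det * ∏ x : V, (X - C (G.degree x : k)) ^ (G.degree x - 1) := by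
    simp only [A, B, Matrix.det_diagonal]
    rw [aux_prod G (fun x => X - C (G.degree x : k)), ← Finset.prod_mul_distrib]
    refine Finset.prod_congr rfl fun x _ => ?_
    rw [← pow_succ', Nat.sub_add_cancel (hdeg x)]
  have hB : B.det ≠ 0 := by
    simp only [B, Matrix.det_diagonal]
    exact Finset.prod_ne_zero_iff.mpr fun x _ => X_sub_C_ne_zero _
  apply mul_left_cancel₀ hB
  rw [key, hA]; ring
end

section
/- Let G = (V,~) be a finite connected simple graph with at least two vertices, M its canonical edge-Laplacian matrix over ℝ and L its graph Laplacian matrix on vertices. Suppose that for every vertex x ∈ V the real number deg(x) is not an eigenvalue of 2·L, i.e. det(2·L − deg(x)·I) ≠ 0 for all x ∈ V. Then the linear endomorphism of ℝ^D determined by M is diagonalisable: ℝ^D admits a basis consisting of eigenvectors of M (equivalently, the supremum of the eigenspaces of M is all of ℝ^D). -/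
open Finset

/-- Sum of an edge function over the edges leaving a vertex. -/
def outSum {V : Type*} [Fintype V] [DecidableEq V] (G : SimpleGraph V)
    [DecidableRel G.Adj] : ({p : V × V // G.Adj p.1 p.2} → ℝ) →ₗ[ℝ] (V → ℝ) where
  toFun ω x := ∑ f : {p : V × V // G.Adj p.1 p.2}, if f.val.1 = x then ω f else 0
  map_add' a b := by
    ext x
    simp only [Pi.add_apply, ← Finset.sum_add_distrib]
    refine Finset.sum_congr rfl fun f _ => ?_
    split_ifs <;> simp
  map_smul' c a := by
    ext x
    simp [Finset.mul_sum]

theorem outSum_apply {V : Type*} [Fintype V] [DecidableEq V] (G : SimpleGraph V)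
    [DecidableRel G.Adj] (ω : {p : V × V // G.Adj p.1 p.2} → ℝ) (x : V) :
    outSum G ω x = ∑ f : {p : V × V // G.Adj p.1 p.2}, if f.val.1 = x then ω f else 0 := rfl

theorem edgeLap_mulVec {V : Type*} [Fintype V] [DecidableEq V] (G : SimpleGraph V)
    [DecidableRel G.Adj] (ω : {p : V × V // G.Adj p.1 p.2} → ℝ)
    (e : {p : V × V // G.Adj p.1 p.2}) :
    (edgeLapMatrix G ℝ).mulVec ω e =
      G.degree e.val.1 * ω e + outSum G ω e.val.1 - 2 * outSum G ω e.val.2 := by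
  simp only [Matrix.mulVec, dotProduct, edgeLapMatrix, Matrix.of_apply, outSum_apply,
    Finset.mul_sum, sub_mul, add_mul, Finset.sum_sub_distrib, Finset.sum_add_distrib]
  simp [ite_mul]

theorem sum_edges {V : Type*} [Fintype V] [DecidableEq V] (G : SimpleGraph V)
    [DecidableRel G.Adj] (g : V → V → ℝ) (x : V) :
    (∑ f : {p : V × V // G.Adj p.1 p.2}, if f.val.1 = x then g f.val.1 f.val.2 else 0) =
      ∑ y, if G.Adj x y then g x y else 0 := by
  have h := Finset.sum_subtype (Finset.univ.filter fun p : V × V => G.Adj p.1 p.2)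
    (p := fun p : V × V => G.Adj p.1 p.2) (F := inferInstance) (by simp)
    (fun p : V × V => if p.1 = x then g p.1 p.2 else 0)
  rw [← h, Finset.sum_filter, Fintype.sum_prod_type, Finset.sum_eq_single x]
  · simp
  · intro b _ hb
    simp [hb]
  · simp

theorem lap_mulVec {V : Type*} [Fintype V] [DecidableEq V] (G : SimpleGraph V)
    [DecidableRel G.Adj] (s : V → ℝ) (x : V) :
    (lapMatrix G ℝ).mulVec s x =
      G.degree x * s x - ∑ y, if G.Adj x y then s y else 0 := by
  simp [Matrix.mulVec, dotProduct, lapMatrix, sub_mul, ite_mul]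

/-- for a connected graph with at least two vertices, if no vertex degree
is an eigenvalue of `2L`, then the canonical edge Laplacian is diagonalisable over `ℝ`:
the supremum of its eigenspaces is everything. -/
theorem stmt_16 {V : Type*} [Fintype V] [DecidableEq V] (G : SimpleGraph V)
    [DecidableRel G.Adj] (hconn : G.Connected) (hcard : 1 < Fintype.card V)
    (hdisj : ∀ x : V,
      ((2 : ℝ) • lapMatrix G ℝ - (G.degree x : ℝ) • (1 : Matrix V V ℝ)).det ≠ 0) :
    (⨆ μ : ℝ, Module.End.eigenspace (Matrix.mulVecLin (edgeLapMatrix G ℝ)) μ) = ⊤ := by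
  classical
  set T := ⨆ μ : ℝ, Module.End.eigenspace (Matrix.mulVecLin (edgeLapMatrix G ℝ)) μ with hT
  have hmem : ∀ (μ : ℝ) ω, (edgeLapMatrix G ℝ).mulVec ω = μ • ω → ω ∈ T := by
    intro μ ω h
    refine Submodule.mem_iSup_of_mem μ ?_
    rw [Module.End.mem_eigenspace_iff]
    simpa using h
  -- lifts of eigenvectors of `2L`
  have hlift : ∀ (μ : ℝ) (s : V → ℝ), ((2 : ℝ) • lapMatrix G ℝ).mulVec s = μ • s →
      ∃ ω ∈ T, outSum G ω = s := by
    intro μ s hs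
    by_cases h0 : s = 0
    · exact ⟨0, T.zero_mem, by simp [h0]⟩
    have hne : ∀ x, μ - (G.degree x : ℝ) ≠ 0 := by
      intro x hx
      apply hdisj x
      rw [← Matrix.exists_mulVec_eq_zero_iff]
      refine ⟨s, h0, ?_⟩
      rw [Matrix.sub_mulVec, hs, Matrix.smul_mulVec, Matrix.one_mulVec, ← sub_smul, hx, zero_smul]
    let ω : {p : V × V // G.Adj p.1 p.2} → ℝ :=
      fun f => (s f.val.1 - 2 * s f.val.2) / (μ - G.degree f.val.1)
    have hω : outSum G ω = s := by
      ext x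
      rw [outSum_apply]
      have h1 := sum_edges G (fun a b => (s a - 2 * s b) / (μ - G.degree a)) x
      refine h1.trans ?_
      have h2 : (∑ y, if G.Adj x y then (s x - 2 * s y) / (μ - G.degree x) else 0)
          = (G.degree x * s x - 2 * ∑ y, if G.Adj x y then s y else 0) / (μ - G.degree x) := by
        have h3 : (G.degree x : ℝ) * s x = ∑ y, if G.Adj x y then s x else 0 := by
          rw [← Finset.sum_filter, Finset.sum_const, nsmul_eq_mul,
            ← SimpleGraph.neighborFinset_eq_filter, SimpleGraph.card_neighborFinset_eq_degree]
        rw [h3, Finset.mul_sum, ← Finset.sum_sub_distrib, Finset.sum_div]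
        refine Finset.sum_congr rfl fun y _ => ?_
        split_ifs <;> simp
      rw [h2, div_eq_iff (hne x)]
      have h4 := congrFun hs x
      rw [Matrix.smul_mulVec, Pi.smul_apply, lap_mulVec, Pi.smul_apply, smul_eq_mul,
        smul_eq_mul] at h4
      linarith
    refine ⟨ω, hmem μ ω ?_, hω⟩
    ext e
    rw [edgeLap_mulVec, hω, Pi.smul_apply, smul_eq_mul]
    have : ω e * (μ - G.degree e.val.1) = s e.val.1 - 2 * s e.val.2 :=
      div_mul_cancel₀ _ (hne _)
    linarith
  have hH : ((2 : ℝ) • lapMatrix G ℝ).IsHermitian := by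
    ext i j
    simp [lapMatrix, G.adj_comm i j, eq_comm (a := i) (b := j)]
    split_ifs with h
    · rw [h]
    · rfl
  have hsurj : ∀ s : V → ℝ, s ∈ T.map (outSum G) := by
    intro s
    have h1 := hH.eigenvectorBasis.sum_repr (WithLp.toLp 2 s)
    have h2 : s = ∑ i, (hH.eigenvectorBasis.repr (WithLp.toLp 2 s) i) •
        (hH.eigenvectorBasis i : V → ℝ) := by
      have := congrArg WithLp.ofLp h1
      simpa using this.symm
    rw [h2]
    refine Submodule.sum_mem _ fun i _ => Submodule.smul_mem _ _ ?_
    exact hlift _ _ (hH.mulVec_eigenvectorBasis i)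
  -- the kernel of `outSum`
  have hker : ∀ ω, outSum G ω = 0 → ω ∈ T := by
    intro ω h
    have hsum : ω = ∑ x : V, fun f : {p : V × V // G.Adj p.1 p.2} =>
        if f.val.1 = x then ω f else 0 := by
      ext f
      simp
    rw [hsum]
    refine Submodule.sum_mem _ fun x _ => ?_
    apply hmem (G.degree x)
    have h0 : outSum G (fun f => if f.val.1 = x then ω f else 0) = 0 := by
      ext y
      rw [outSum_apply]
      by_cases hy : y = x
      · subst hy
        have := congrFun h y
        rw [outSum_apply] at this
        rw [← this]
        refine Finset.sum_congr rfl fun f _ => ?_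
        split_ifs <;> rfl
      · refine Finset.sum_eq_zero fun f _ => ?_
        split_ifs with h1 h2
        · exact absurd (h1.symm.trans h2) hy
        · rfl
        · rfl
    ext e
    rw [edgeLap_mulVec, h0]
    by_cases he : e.val.1 = x
    · subst he
      simp
    · simp [he]
  rw [eq_top_iff]
  intro ω _
  obtain ⟨η, hη, h⟩ := hsurj (outSum G ω)
  have := T.add_mem (hker (ω - η) (by rw [map_sub, h, sub_self])) hη
  simpa using this
end

section
/- Let k be a commutative ring, G a finite group and C ⊆ G \ {e} closed under inversion, and let Δ be the canonical edge Laplacian of the Cayley graph of (G,C) over k. Then: (i) for every a ∈ C, Δe_a = |C|·e_a − θ; (ii) if v : C → (G → k) satisfies Σ_{a ∈ C}(2·v_a(x·a⁻¹) − v_a(x)) = 0 for all x ∈ G, then the 1-form ω defined by ω(x, xa) = v_a(x) satisfies Δω = |C|·ω (with |C| regarded as an element of k). -/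
open Finset

/-- The canonical edge Laplacian of the Cayley graph of `(G, C)` acting on 1-forms:
`(Δω)(x,y) = deg(x)·ω(x,y) − 2·Σ_{w~x} ω(w,x) + Σ_{z~x} ω(x,z)`, where `w ~ x` iff
`x⁻¹w ∈ C`. -/
def cayleyEdgeLap {k : Type*} [CommRing k] {G : Type*} [Group G] [Fintype G]
    [DecidableEq G] (C : Finset G) (ω : G → G → k) : G → G → k :=
  fun x y =>
    ((Finset.univ.filter (fun z : G => x⁻¹ * z ∈ C)).card : k) * ω x y
      - 2 * (∑ w : G, if x⁻¹ * w ∈ C then ω w x else 0)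
      + ∑ z : G, if x⁻¹ * z ∈ C then ω x z else 0

theorem cayleyEdgeLap_eq {k : Type*} [CommRing k] {G : Type*} [Group G] [Fintype G]
    [DecidableEq G] (C : Finset G) (hCinv : ∀ a ∈ C, a⁻¹ ∈ C) (ω : G → G → k) (x y : G) :
    cayleyEdgeLap C ω x y = (C.card : k) * ω x y - 2 * (∑ a ∈ C, ω (x * a⁻¹) x)
      + ∑ a ∈ C, ω x (x * a) := by
  have key : ∀ f : G → k, (∑ z : G, if x⁻¹ * z ∈ C then f z else 0) = ∑ a ∈ C, f (x * a) := by
    intro f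
    rw [← Equiv.sum_comp (Equiv.mulLeft x)]
    simp [Finset.sum_ite_mem]
  have hcard : ((Finset.univ.filter (fun z : G => x⁻¹ * z ∈ C)).card : k) = (C.card : k) := by
    have h := key (fun _ => 1)
    simpa using h
  have hinv : ∑ a ∈ C, ω (x * a) x = ∑ a ∈ C, ω (x * a⁻¹) x := by
    refine Finset.sum_bij' (fun a _ => a⁻¹) (fun a _ => a⁻¹) hCinv hCinv ?_ ?_ ?_ <;> simp
  unfold cayleyEdgeLap
  rw [hcard, key (fun w => ω w x), key (fun z => ω x z), hinv]

/-- on a Cayley graph, (i) `Δe_a = |C|·e_a − θ`; (ii) any 1-form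
`ω(x,xa) = v_a(x)` with `Σ_{a∈C}(2·v_a(xa⁻¹) − v_a(x)) = 0` is an eigenvector of the
canonical edge Laplacian with eigenvalue `|C|`. -/
theorem stmt_18 {k : Type*} [CommRing k] {G : Type*} [Group G] [Fintype G]
    [DecidableEq G] (C : Finset G) (hC1 : (1 : G) ∉ C) (hCinv : ∀ a ∈ C, a⁻¹ ∈ C) :
    (∀ a ∈ C, ∀ x y : G, x⁻¹ * y ∈ C →
        cayleyEdgeLap C (fun u v : G => if u⁻¹ * v = a then (1 : k) else 0) x y
          = (C.card : k) * (if x⁻¹ * y = a then (1 : k) else 0) - 1) ∧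
    (∀ v : G → G → k,
        (∀ x : G, (∑ a ∈ C, (2 * v a (x * a⁻¹) - v a x)) = 0) →
        ∀ x y : G, x⁻¹ * y ∈ C →
          cayleyEdgeLap C
              (fun u w : G => if u⁻¹ * w ∈ C then v (u⁻¹ * w) u else 0) x y
            = (C.card : k) * v (x⁻¹ * y) x) := by
  refine ⟨?_, ?_⟩
  · intro a ha x y _
    rw [cayleyEdgeLap_eq C hCinv]
    simp [ha]
    ring
  · intro v hv x y hxy
    rw [cayleyEdgeLap_eq C hCinv]
    have h := hv x
    rw [Finset.sum_sub_distrib, ← Finset.mul_sum] at h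
    have h1 : ∑ a ∈ C, (if (x * a⁻¹)⁻¹ * x ∈ C then v ((x * a⁻¹)⁻¹ * x) (x * a⁻¹) else 0)
        = ∑ a ∈ C, v a (x * a⁻¹) :=
      Finset.sum_congr rfl fun a ha => by simp [ha]
    have h2 : ∑ a ∈ C, (if x⁻¹ * (x * a) ∈ C then v (x⁻¹ * (x * a)) x else 0)
        = ∑ a ∈ C, v a x :=
      Finset.sum_congr rfl fun a ha => by simp [ha]
    rw [h1, h2, if_pos hxy]
    linear_combination -h
end
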